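/- Let n be an odd integer with n ≥ 7 and let f : F → 𝔽₂ be defined by f(x) = tr(x^{15}). Then nl₃(f) ≥ 2^{n−1} − (1/2)·√((2^n − 1)·√((29/8)·2^{(3n+1)/2} + 2^{n+1} − 7·2^{(n+5)/2}) + 2^n). -/

import Mathlib

noncomputable section

/-- `Fq n` is the finite field with `2 ^ n` elements. -/
abbrev Fq (n : ℕ) : Type := GaloisField 2 n

/-- The absolute trace map `tr x = x + x^2 + x^4 + ⋯ + x^(2^(n-1))` from `Fq n` to `𝔽₂`. -/
def tr {n : ℕ} (x : Fq n) : ZMod 2 := Algebra.trace (ZMod 2) (Fq n) x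

/-- The derivative of `f` with respect to `a`. -/
def der {n : ℕ} (f : Fq n → ZMod 2) (a : Fq n) : Fq n → ZMod 2 :=
  fun x => f x + f (x + a)

/-- Iterated derivatives along a list of directions (head applied last/outermost). -/
def derIter {n : ℕ} (f : Fq n → ZMod 2) : List (Fq n) → (Fq n → ZMod 2)
  | [] => f
  | a :: as => der (derIter f as) a

/-- `g` has algebraic degree at most `r`: all `(r+1)`-th order derivatives vanish. -/
def degLE {n : ℕ} (g : Fq n → ZMod 2) (r : ℕ) : Prop :=
  ∀ l : List (Fq n), l.length = r + 1 → derIter g l = fun _ => 0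

/-- Hamming distance between two Boolean functions on `Fq n`. -/
def hdist {n : ℕ} (f g : Fq n → ZMod 2) : ℕ :=
  {x : Fq n | f x ≠ g x}.ncard

/-- The `r`-th order nonlinearity of `f`. -/
def nl {n : ℕ} (r : ℕ) (f : Fq n → ZMod 2) : ℕ :=
  sInf {d : ℕ | ∃ g : Fq n → ZMod 2, degLE g r ∧ d = hdist f g}

/-- The linear kernel of `f`: directions along which the derivative is constant. -/
def linKer {n : ℕ} (f : Fq n → ZMod 2) : Set (Fq n) :=
  {b | ∃ c : ZMod 2, ∀ x, der f b x = c}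

/-- The weight of a Boolean function on `Fq n`. -/
def wt {n : ℕ} (f : Fq n → ZMod 2) : ℕ := {x : Fq n | f x = 1}.ncard

set_option linter.unusedSectionVars false

/-- sign character of `ZMod 2` -/
def eps (z : ZMod 2) : ℤ := if z = 0 then 1 else -1

lemma eps_add (a b : ZMod 2) : eps (a + b) = eps a * eps b := by
  revert a b; decide
lemma eps_zero : eps 0 = 1 := by decide
lemma eps_sq (a : ZMod 2) : eps a * eps a = 1 := by revert a; decide
lemma eps_le (a : ZMod 2) : eps a ≤ 1 := by revert a; decide
lemma eps_ge (a : ZMod 2) : -1 ≤ eps a := by revert a; decide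
lemma zmod2_ne {a : ZMod 2} (h : a ≠ 0) : a = 1 := by revert a; decide
lemma zmod2_ne' {a : ZMod 2} (h : a ≠ 1) : a = 0 := by revert a; decide
lemma zmod2_self (a : ZMod 2) : a + a = 0 := by revert a; decide

/-- data of an absolute trace function on a field with `2^n` elements, `n` odd. -/
structure TrData {F : Type} [Field F] [Fintype F] (t : F →+ ZMod 2) (n : ℕ) : Prop where
  sq : ∀ x, t (x ^ 2) = t x
  one : t 1 = 1
  nd : ∀ y, (∀ x, t (x * y) = 0) → y = 0
  card : Fintype.card F = 2 ^ n
  odd : Odd n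

section gen
variable {F : Type} [Field F] [Fintype F] [DecidableEq F] [CharP F 2] {t : F →+ ZMod 2} {n : ℕ}

lemma self_add (x : F) : x + x = 0 := CharTwo.add_self_eq_zero x

lemma add_eq_zero_iff2 {x y : F} : x + y = 0 ↔ x = y := CharTwo.add_eq_zero

lemma sum_add_shift {V : Type} [AddCommGroup V] [Fintype V] (φ : V →+ ZMod 2) (h : ∃ v, φ v ≠ 0) :
    ∑ x, eps (φ x) = 0 := by
  obtain ⟨v, hv⟩ := h
  have h1 : ∑ x, eps (φ x) = ∑ x, eps (φ (x + v)) :=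
    (Equiv.sum_comp (Equiv.addRight v) (fun x => eps (φ x))).symm
  have h2 : ∑ x, eps (φ (x + v)) = - ∑ x, eps (φ x) := by
    rw [← Finset.sum_neg_distrib]
    refine Finset.sum_congr rfl fun x _ => ?_
    rw [map_add, zmod2_ne hv, eps_add]
    have : eps 1 = -1 := by decide
    rw [this]; ring
  omega

lemma sum_char (d : TrData t n) (c : F) :
    ∑ x, eps (t (x * c)) = if c = 0 then (2 ^ n : ℤ) else 0 := by
  split_ifs with h
  · subst h
    simp [eps_zero, d.card]
  · refine sum_add_shift (t.comp (AddMonoidHom.mulRight c)) ?_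
    by_contra hc
    push Not at hc
    exact h (d.nd c (fun x => hc x))

lemma sum_units (g : F → ℤ) : ∑ x, g x = g 0 + ∑ s : Fˣ, g s := by
  rw [← Finset.add_sum_erase _ _ (Finset.mem_univ (0:F))]
  congr 1
  refine (Finset.sum_bij (fun (s : Fˣ) _ => (s : F)) ?_ ?_ ?_ ?_).symm
  · intro s _; simp
  · intro a _ b _ h; exact Units.ext h
  · intro b hb
    exact ⟨Units.mk0 b (by simpa using hb), Finset.mem_univ _, rfl⟩
  · intro _ _; rfl

lemma card_units (d : TrData t n) : (Fintype.card Fˣ : ℤ) = 2 ^ n - 1 := by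
  have := sum_units (F := F) (fun _ => (1:ℤ))
  simp [d.card] at this
  omega

lemma cop3 (hn : Odd n) : Nat.Coprime (2 ^ n - 1) 3 := by
  obtain ⟨k, rfl⟩ := hn
  have h : (2 ^ (2 * k + 1)) % 3 = 2 := by
    rw [pow_succ, pow_mul, Nat.mul_mod, Nat.pow_mod]; norm_num
  have h2 : 0 < 2 ^ (2 * k + 1) := by positivity
  rw [Nat.coprime_comm, Nat.Prime.coprime_iff_not_dvd Nat.prime_three]
  generalize 2 ^ (2 * k + 1) = m at *
  omega

lemma natcard_units (d : TrData t n) : Nat.card Fˣ = 2 ^ n - 1 := by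
  have := card_units d
  rw [Nat.card_eq_fintype_card]
  have h2 : 0 < 2 ^ n := by positivity
  zify [h2]
  exact this

lemma cube_bij (d : TrData t n) : Function.Bijective (fun s : Fˣ => s ^ 3) := by
  have h : (Nat.card Fˣ).Coprime 3 := by rw [natcard_units d]; exact cop3 d.odd
  exact (powCoprime h).bijective

lemma cube_inv_bij (d : TrData t n) : Function.Bijective (fun s : Fˣ => (s ^ 3)⁻¹) :=
  (Equiv.inv Fˣ).bijective.comp (cube_bij d)

lemma cube_inj (d : TrData t n) {x y : F} (h : x ^ 3 = y ^ 3) : x = y := by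
  by_cases hx : x = 0
  · subst hx
    have : y ^ 3 = 0 := by rw [← h]; ring
    exact (pow_eq_zero_iff (by norm_num)).1 this |>.symm
  · have hy : y ≠ 0 := by
      rintro rfl
      exact hx ((pow_eq_zero_iff (by norm_num)).1 (h.trans (by ring)))
    have := (cube_bij d).1 (a₁ := Units.mk0 x hx) (a₂ := Units.mk0 y hy)
      (by ext; simpa using h)
    simpa using congrArg (Units.val) this

/-- trace zero elements are of the form x²+x -/
lemma hilb (d : TrData t n) {y : F} (hy : t y = 0) : ∃ x, x ^ 2 + x = y := by
  by_contra hc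
  push Not at hc
  -- count
  have key : ∀ y : F, ∑ x, (∑ z, eps (t (z * (x ^ 2 + x + y)))) =
      ∑ z, eps (t (z * y)) * (∑ x, eps (t (x * (z + z ^ 2)))) := by
    intro y
    rw [Finset.sum_comm]
    refine Finset.sum_congr rfl fun z _ => ?_
    rw [Finset.mul_sum]
    have hb : Function.Bijective (fun x : F => x ^ 2) := by
      refine (Finite.injective_iff_bijective).1 ?_
      intro a b h
      exact CharTwo.sq_injective h
    have : ∀ x, eps (t (z * (x ^ 2 + x + y))) = eps (t (z * y)) * eps (t (x ^ 2 * (z + z ^ 2))) := by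
      intro x
      rw [← eps_add, ← map_add]
      congr 1
      have e1 : t (x ^ 2 * z ^ 2) = t (x * z) := by rw [← mul_pow, d.sq]
      have e2 : z * (x ^ 2 + x + y) = x ^ 2 * z + x * z + z * y := by ring
      have e3 : z * y + x ^ 2 * (z + z ^ 2) = x ^ 2 * z + x ^ 2 * z ^ 2 + z * y := by ring
      rw [e2, e3]
      simp only [map_add, e1]
    simp only [this]
    exact hb.sum_comp (fun x => eps (t (z * y)) * eps (t (x * (z + z ^ 2))))
  have k1 := key y
  have l0 : ∑ x, (∑ z, eps (t (z * (x ^ 2 + x + y)))) = 0 := by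
    refine Finset.sum_eq_zero fun x _ => ?_
    rw [sum_char d, if_neg]
    intro h
    exact hc x (add_eq_zero_iff2.1 h)
  rw [l0] at k1
  have r0 : ∀ z : F, eps (t (z * y)) * (∑ x, eps (t (x * (z + z ^ 2)))) =
      (if z = 0 then (2 ^ n : ℤ) else 0) + (if z = 1 then (2 ^ n : ℤ) else 0) := by
    intro z
    rw [sum_char d]
    by_cases h0 : z = 0
    · subst h0; simp [eps_zero]
    by_cases h1 : z = 1
    · subst h1; simp [eps_zero, hy, self_add]
    · rw [if_neg, if_neg h0, if_neg h1]; · simp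
      intro h
      have : z * (1 + z) = 0 := by rw [← h]; ring
      rcases mul_eq_zero.1 this with h | h
      · exact h0 h
      · exact h1 (add_eq_zero_iff2.1 h).symm
  simp only [r0, Finset.sum_add_distrib, Finset.sum_ite_eq', Finset.mem_univ, if_true] at k1
  have : (0:ℤ) < 2 ^ n := by positivity
  omega

lemma tr_sq_add (d : TrData t n) (x : F) : t (x ^ 2 + x) = 0 := by
  rw [map_add, d.sq, zmod2_self]

lemma add_sq2 (x y : F) : (x + y) ^ 2 = x ^ 2 + y ^ 2 := CharTwo.add_sq x y

lemma add_pow4 (x y : F) : (x + y) ^ 4 = x ^ 4 + y ^ 4 := by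
  have : ∀ z : F, z ^ 4 = (z ^ 2) ^ 2 := fun z => by ring
  rw [this, add_sq2, add_sq2, ← this, ← this]

lemma add_pow8 (x y : F) : (x + y) ^ 8 = x ^ 8 + y ^ 8 := by
  have : ∀ z : F, z ^ 8 = (z ^ 4) ^ 2 := fun z => by ring
  rw [this, add_pow4, add_sq2, ← this, ← this]

/-- equal artin-schreier values -/
lemma as_eq {x y : F} (h : x ^ 2 + x = y ^ 2 + y) : x = y ∨ x = y + 1 := by
  have h3 : (x + y) * (x + y + 1) = 0 := by
    have : (x + y) * (x + y + 1) = (x + y) ^ 2 + (x + y) := by ring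
    rw [this, add_sq2]
    have : x ^ 2 + y ^ 2 + (x + y) = (x ^ 2 + x) + (y ^ 2 + y) := by ring
    rw [this, h, self_add]
  rcases mul_eq_zero.1 h3 with h | h
  · exact Or.inl (add_eq_zero_iff2.1 h)
  · right
    rw [add_assoc] at h
    exact add_eq_zero_iff2.1 h

/-- permanent of the 3×3 Moore matrix -/
def M3 (b c x : F) : F :=
  b * c ^ 2 * x ^ 4 + b * c ^ 4 * x ^ 2 + b ^ 2 * c * x ^ 4 + b ^ 2 * c ^ 4 * x
    + b ^ 4 * c * x ^ 2 + b ^ 4 * c ^ 2 * x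

lemma M3_symm (b c x : F) : M3 b c x = M3 c b x := by unfold M3; ring
lemma M3_symm' (b c x : F) : M3 b c x = M3 b x c := by unfold M3; ring
lemma M3_add (b c x y : F) : M3 b c (x + y) = M3 b c x + M3 b c y := by
  unfold M3; rw [add_pow4, add_sq2]; ring
lemma M3_add' (b c x y : F) : M3 b (x + y) c = M3 b x c + M3 b y c := by
  rw [M3_symm', M3_add, M3_symm' b c x, M3_symm' b c y]
lemma two_zero : (2 : F) = 0 := CharTwo.two_eq_zero
lemma M3_self (b x : F) : M3 b b x = 0 := by
  have : M3 b b x = 2 * (b ^ 3 * x ^ 4 + b ^ 5 * x ^ 2 + b ^ 6 * x) := by unfold M3; ring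
  rw [this, two_zero, zero_mul]
lemma M3_zero (b x : F) : M3 b 0 x = 0 := by unfold M3; ring
lemma M3_zero' (c x : F) : M3 0 c x = 0 := by unfold M3; ring

lemma M3_scale (b y x : F) : M3 b (b * y) (b * x) =
    b ^ 7 * ((y ^ 2 + y) * (x ^ 2 + x) ^ 2 + (y ^ 2 + y) ^ 2 * (x ^ 2 + x)) := by
  rw [add_sq2, add_sq2]
  have : b ^ 7 * ((y ^ 2 + y) * ((x ^ 2) ^ 2 + x ^ 2) + ((y ^ 2) ^ 2 + y ^ 2) * (x ^ 2 + x))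
    = M3 b (b * y) (b * x) + 2 * (b ^ 7 * x ^ 2 * y ^ 2) := by unfold M3; ring
  rw [this, two_zero]; ring

variable (t) in
/-- the radical of the form at `b` -/
def Krad (μ b : F) : Finset F := Finset.univ.filter fun c => ∀ x, t (μ * M3 b c x) = 0

lemma mem_Krad {μ b c : F} : c ∈ Krad t μ b ↔ ∀ x, t (μ * M3 b c x) = 0 := by simp [Krad]

lemma Krad_symm {μ b c : F} : c ∈ Krad t μ b ↔ b ∈ Krad t μ c := by
  simp only [mem_Krad, M3_symm b c]

lemma Krad_add {μ b c c' : F} (h : c ∈ Krad t μ b) (h' : c' ∈ Krad t μ b) :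
    c + c' ∈ Krad t μ b := by
  rw [mem_Krad] at *
  intro x
  rw [M3_add', mul_add, map_add, h, h', add_zero]

lemma zero_mem_Krad (μ b : F) : 0 ∈ Krad t μ b := by
  rw [mem_Krad]; intro x; simp [M3_zero]
lemma self_mem_Krad (μ b : F) : b ∈ Krad t μ b := by
  rw [mem_Krad]; intro x; simp [M3_self]
lemma Krad_zero (μ : F) : Krad t μ 0 = Finset.univ := by
  ext x; simp [mem_Krad, M3_zero']

lemma as_card (d : TrData t n) (Z : Finset F) (hZ : ∀ z ∈ Z, t z = 0) :
    (Finset.univ.filter fun y : F => y ^ 2 + y ∈ Z).card = 2 * Z.card := by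
  rw [Finset.card_eq_sum_card_fiberwise (f := fun y => y ^ 2 + y) (t := Z)]
  · rw [Finset.sum_const_nat (m := 2), mul_comm]
    intro z hz
    obtain ⟨y, hy⟩ := hilb d (hZ z hz)
    have : (Finset.univ.filter fun y : F => y ^ 2 + y ∈ Z).filter (fun x => x ^ 2 + x = z)
        = {y, y + 1} := by
      ext x
      simp only [Finset.mem_filter, Finset.mem_univ, true_and, Finset.mem_insert,
        Finset.mem_singleton]
      constructor
      · rintro ⟨_, h⟩
        exact as_eq (h.trans hy.symm)
      · have e : (y + 1) ^ 2 + (y + 1) = z := by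
          rw [add_sq2, ← hy]
          have : y ^ 2 + 1 ^ 2 + (y + 1) = y ^ 2 + y + (1 + 1) := by ring
          rw [this, self_add, add_zero]
        rintro (rfl | rfl)
        · exact ⟨hy ▸ hz, hy⟩
        · exact ⟨e ▸ hz, e⟩
    rw [this, Finset.card_pair]
    intro h
    have : (1:F) = 0 := by simp at h
    exact one_ne_zero this
  · intro y hy
    simpa using hy

lemma hyper (d : TrData t n) {c : F} : (∀ h, t h = 0 → t (h * c) = 0) ↔ c = 0 ∨ c = 1 := by
  constructor
  · intro H
    by_cases hc : t c = 0
    · left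
      refine d.nd c fun x => ?_
      by_cases hx : t x = 0
      · exact H x hx
      · have := H (x + 1) (by rw [map_add, zmod2_ne hx, d.one]; decide)
        rwa [add_mul, map_add, one_mul, hc, add_zero] at this
    · right
      have hc := zmod2_ne hc
      have : c + 1 = 0 := by
        refine d.nd _ fun x => ?_
        rw [mul_add, map_add, mul_one]
        by_cases hx : t x = 0
        · rw [H x hx, hx, add_zero]
        · have := H (x + 1) (by rw [map_add, zmod2_ne hx, d.one]; decide)
          rw [add_mul, map_add, one_mul, hc] at this
          rwa [zmod2_ne hx]
      exact add_eq_zero_iff2.1 this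
  · rintro (rfl | rfl) h hh <;> simp [hh]

lemma mem_Krad_iff (d : TrData t n) {μ b δ : F} (h : μ * b ^ 7 * δ ^ 3 = 1) (y : F) :
    b * y ∈ Krad t μ b ↔ ∃ z, y ^ 2 + y = δ * z ∧ (z + z ^ 4 = 0 ∨ z + z ^ 4 = δ ^ 2) := by
  have hδ : δ ≠ 0 := by rintro rfl; simp at h
  have hb : b ≠ 0 := by rintro rfl; simp at h
  have hμ : μ * b ^ 7 = (δ ^ 3)⁻¹ := eq_inv_of_mul_eq_one_left h
  obtain ⟨z, hz⟩ : ∃ z, y ^ 2 + y = δ * z := ⟨(y ^ 2 + y) / δ, by field_simp⟩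
  have e1 : (∃ z, y ^ 2 + y = δ * z ∧ (z + z ^ 4 = 0 ∨ z + z ^ 4 = δ ^ 2)) ↔
      (z + z ^ 4 = 0 ∨ z + z ^ 4 = δ ^ 2) := by
    constructor
    · rintro ⟨z', h1, h2⟩
      have : z' = z := mul_left_cancel₀ hδ (h1.symm.trans hz)
      rwa [this] at h2
    · intro h; exact ⟨z, hz, h⟩
  rw [e1]
  have e2 : (z + z ^ 4 = 0 ∨ z + z ^ 4 = δ ^ 2) ↔
      ((z + z ^ 4) / δ ^ 2 = 0 ∨ (z + z ^ 4) / δ ^ 2 = 1) := by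
    have h2 : δ ^ 2 ≠ 0 := pow_ne_zero _ hδ
    rw [div_eq_iff h2, div_eq_iff h2, zero_mul, one_mul]
  rw [e2, ← hyper d, mem_Krad]
  have key : ∀ x, t (μ * M3 b (b * y) (b * x)) =
      t ((x ^ 2 + x) ^ 2 * ((z + z ^ 4) / δ ^ 2)) := by
    intro x
    set w := x ^ 2 + x
    have a1 : μ * M3 b (b * y) (b * x) = w ^ 2 * (z / δ ^ 2) + w * (z ^ 2 / δ) := by
      rw [M3_scale, hz, ← mul_assoc, hμ]
      field_simp
      ring
    have a2 : w ^ 2 * ((z + z ^ 4) / δ ^ 2) = w ^ 2 * (z / δ ^ 2) + (w * (z ^ 2 / δ)) ^ 2 := by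
      field_simp
    rw [a1, a2, map_add, map_add, d.sq]
  constructor
  · intro H w hw
    have hw' : ∃ v, v ^ 2 = w := by
      have hb : Function.Bijective (fun x : F => x ^ 2) :=
        (Finite.injective_iff_bijective).1 fun a b h => CharTwo.sq_injective h
      exact hb.2 w
    obtain ⟨v, rfl⟩ := hw'
    rw [d.sq] at hw
    obtain ⟨x, rfl⟩ := hilb d hw
    rw [← key]
    exact H _
  · intro H x
    have : x = b * (x / b) := by field_simp
    rw [this, key]
    exact H _ (by rw [d.sq, tr_sq_add d])

lemma Krad_card (d : TrData t n) {μ b δ : F} (h : μ * b ^ 7 * δ ^ 3 = 1) :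
    (Krad t μ b).card = if t δ = 0 then 8 else 2 := by
  have hδ : δ ≠ 0 := by rintro rfl; simp at h
  have hb : b ≠ 0 := by rintro rfl; simp at h
  have main : ∀ Z : Finset F, (∀ z ∈ Z, t z = 0) →
      (∀ y, b * y ∈ Krad t μ b ↔ y ^ 2 + y ∈ Z) → (Krad t μ b).card = 2 * Z.card := by
    intro Z hZ hy
    rw [← as_card d Z hZ]
    refine (Finset.card_bij (fun y _ => b * y) ?_ ?_ ?_).symm
    · intro y hy'
      rw [hy]; simpa using hy'
    · intro y _ y' _ e
      exact mul_left_cancel₀ hb e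
    · intro c hc
      refine ⟨c / b, ?_, by field_simp⟩
      simp only [Finset.mem_filter, Finset.mem_univ, true_and]
      rw [← hy]
      rwa [mul_div_cancel₀ _ hb]
  have z01 : ∀ z : F, z + z ^ 4 = 0 ↔ z = 0 ∨ z = 1 := by
    intro z
    constructor
    · intro hz
      by_cases h0 : z = 0
      · exact Or.inl h0
      · right
        have : z * z ^ 3 = z * 1 := by
          have := add_eq_zero_iff2.1 hz
          rw [mul_one]; nth_rewrite 3 [this]; ring
        have := mul_left_cancel₀ h0 this
        exact cube_inj d (by rw [this]; ring)
    · rintro (rfl | rfl)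
      · ring
      · rw [one_pow, self_add]
  split_ifs with ht
  · obtain ⟨u, hu⟩ := hilb d (y := δ ^ 2) (by rw [d.sq, ht])
    obtain ⟨u', hu', hut⟩ : ∃ u', u' ^ 2 + u' = δ ^ 2 ∧ t u' = 0 := by
      by_cases h0 : t u = 0
      · exact ⟨u, hu, h0⟩
      · refine ⟨u + 1, ?_, by rw [map_add, zmod2_ne h0, d.one]; decide⟩
        rw [add_sq2, ← hu]
        have : u ^ 2 + 1 ^ 2 + (u + 1) = u ^ 2 + u + (1 + 1) := by ring
        rw [this, self_add, add_zero]
    obtain ⟨z, hz⟩ := hilb d hut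
    have hzz : z + z ^ 4 = δ ^ 2 := by
      rw [← hu', ← hz, add_sq2]
      have : (z ^ 2) ^ 2 + z ^ 2 + (z ^ 2 + z) = z + z ^ 4 + (z ^ 2 + z ^ 2) := by ring
      rw [this, self_add, add_zero]
    have htz : t (δ * z) = 0 := by
      rw [← d.sq, mul_pow, ← hzz]
      have : (z + z ^ 4) * z ^ 2 = (z ^ 3) ^ 2 + z ^ 3 := by ring
      rw [this, tr_sq_add d]
    have hz0 : z ≠ 0 := by
      rintro rfl; exact hδ (by simpa using hzz.symm)
    have hz1 : z ≠ 1 := by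
      rintro rfl
      rw [one_pow, self_add] at hzz
      exact hδ (by simpa using hzz.symm)
    have hc : ({0, δ, δ * z, δ * (z + 1)} : Finset F).card = 4 := by
      have h4 : z + 1 ≠ 0 := fun h => hz1 (add_eq_zero_iff2.1 h)
      have a1 : (0:F) ∉ ({δ, δ * z, δ * (z + 1)} : Finset F) := by
        simp only [Finset.mem_insert, Finset.mem_singleton, not_or]
        exact ⟨hδ.symm, (mul_ne_zero hδ hz0).symm, (mul_ne_zero hδ h4).symm⟩
      have a2 : δ ∉ ({δ * z, δ * (z + 1)} : Finset F) := by
        simp only [Finset.mem_insert, Finset.mem_singleton, not_or]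
        constructor
        · intro e
          exact hz1 (mul_left_cancel₀ hδ (by rw [← e, mul_one]))
        · intro e
          have : z + 1 = 1 := mul_left_cancel₀ hδ (by rw [← e, mul_one])
          exact hz0 (by simpa using this)
      have a3 : δ * z ∉ ({δ * (z + 1)} : Finset F) := by
        simp only [Finset.mem_singleton]
        intro e
        have := mul_left_cancel₀ hδ e
        simp at this
      rw [Finset.card_insert_of_notMem a1, Finset.card_insert_of_notMem a2,
        Finset.card_insert_of_notMem a3, Finset.card_singleton]
    rw [main {0, δ, δ * z, δ * (z + 1)}, hc]
    · intro v hv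
      simp only [Finset.mem_insert, Finset.mem_singleton] at hv
      rcases hv with rfl | rfl | rfl | rfl
      · simp
      · exact ht
      · exact htz
      · rw [mul_add, map_add, htz, mul_one, ht, add_zero]
    · intro y
      rw [mem_Krad_iff d h]
      simp only [Finset.mem_insert, Finset.mem_singleton]
      constructor
      · rintro ⟨v, hv, hv' | hv'⟩
        · rcases (z01 v).1 hv' with rfl | rfl
          · left; rw [hv, mul_zero]
          · right; left; rw [hv, mul_one]
        · have : (v + z) + (v + z) ^ 4 = 0 := by
            rw [add_pow4]
            have : v + z + (v ^ 4 + z ^ 4) = (v + v ^ 4) + (z + z ^ 4) := by ring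
            rw [this, hv', hzz, self_add]
          rcases (z01 _).1 this with e | e
          · right; right; left
            rw [hv, add_eq_zero_iff2.1 e]
          · right; right; right
            have : v = z + 1 := by
              rw [← e, add_comm v z, ← add_assoc, self_add, zero_add]
            rw [hv, this]
      · rintro (e | e | e | e)
        · exact ⟨0, by rw [e, mul_zero], Or.inl ((z01 0).2 (Or.inl rfl))⟩
        · exact ⟨1, by rw [e, mul_one], Or.inl ((z01 1).2 (Or.inr rfl))⟩
        · exact ⟨z, e, Or.inr hzz⟩
        · refine ⟨z + 1, e, Or.inr ?_⟩
          rw [add_pow4, ← hzz]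
          have : z + 1 + (z ^ 4 + 1 ^ 4) = z + z ^ 4 + (1 + 1) := by ring
          rw [this, self_add, add_zero]
  · rw [main {0}, Finset.card_singleton]
    · simp
    · intro y
      rw [mem_Krad_iff d h]
      simp only [Finset.mem_singleton]
      constructor
      · rintro ⟨v, hv, hv' | hv'⟩
        · rcases (z01 v).1 hv' with rfl | rfl
          · rw [hv, mul_zero]
          · exfalso
            have := tr_sq_add d y
            rw [hv, mul_one] at this
            exact ht this
        · exfalso
          have : t (v + v ^ 4) = 0 := by
            have e : v ^ 4 = (v ^ 2) ^ 2 := by ring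
            rw [map_add, e, d.sq, d.sq, zmod2_self]
          rw [hv', d.sq] at this
          exact ht this
      · intro e
        exact ⟨0, by rw [e, mul_zero], Or.inl ((z01 0).2 (Or.inl rfl))⟩

variable (t) in
/-- the exponential sums -/
def TT (A B : F) : ℤ := ∑ s : Fˣ, eps (t (A * (s : F) ^ 7 + B * ((s : F) ^ 3)⁻¹))

variable (t) in
/-- the exceptional set -/
def XX (μ : F) : Finset F :=
  Finset.univ.filter fun b => b ≠ 0 ∧ (Krad t μ b).card = 8 ∧ ∀ c ∈ Krad t μ b, t c = 0

lemma Krad_sum (μ b : F) : ∑ c ∈ Krad t μ b, eps (t c) =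
    if (∀ c ∈ Krad t μ b, t c = 0) then ((Krad t μ b).card : ℤ) else 0 := by
  split_ifs with h
  · rw [Finset.sum_congr rfl (g := fun _ => (1:ℤ))]
    · simp
    · intro c hc; rw [h c hc, eps_zero]
  · push Not at h
    obtain ⟨v, hv, hv'⟩ := h
    have h1 : ∑ c ∈ Krad t μ b, eps (t c) = ∑ c ∈ Krad t μ b, eps (t (c + v)) := by
      refine Finset.sum_bij (fun c _ => c + v) ?_ ?_ ?_ ?_
      · intro c hc; exact Krad_add hc hv
      · intro c _ c' _ e; exact add_right_cancel e
      · intro c hc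
        exact ⟨c + v, Krad_add hc hv, by rw [add_assoc, self_add, add_zero]⟩
      · intro c hc
        rw [add_assoc, self_add, add_zero]
    have h2 : ∑ c ∈ Krad t μ b, eps (t (c + v)) = - ∑ c ∈ Krad t μ b, eps (t c) := by
      rw [← Finset.sum_neg_distrib]
      refine Finset.sum_congr rfl fun x _ => ?_
      rw [map_add, zmod2_ne hv', eps_add]
      have : eps 1 = -1 := by decide
      rw [this]; ring
    omega

lemma Krad_double (μ : F) : ∑ b, ∑ c ∈ Krad t μ b, eps (t c) =
    ∑ b, eps (t b) * ((Krad t μ b).card : ℤ) := by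
  have h1 : ∀ b, ∑ c ∈ Krad t μ b, eps (t c) = ∑ c, if c ∈ Krad t μ b then eps (t c) else 0 := by
    intro b
    rw [← Finset.sum_filter]
    simp
  simp only [h1]
  rw [Finset.sum_comm]
  refine Finset.sum_congr rfl fun b _ => ?_
  simp only [Krad_symm (c := b)]
  rw [← Finset.sum_filter]
  simp [mul_comm]

lemma TT_zero_one (d : TrData t n) : TT t 0 1 = -1 := by
  have h := sum_char d 1
  rw [if_neg one_ne_zero, sum_units] at h
  simp only [mul_one, map_zero, eps_zero] at h
  have : TT t 0 1 = ∑ s : Fˣ, eps (t (s : F)) := by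
    unfold TT
    rw [← (cube_inv_bij d).sum_comp (fun s : Fˣ => eps (t (s : F)))]
    refine Finset.sum_congr rfl fun s _ => ?_
    simp
  omega

lemma countX (d : TrData t n) {ν : F} (hν : ν ≠ 0) :
    16 * ((XX t (ν ^ 3)⁻¹).card : ℤ) = 2 ^ n - 8 + TT t ν 0 + 7 * TT t ν 1 := by
  set μ := (ν ^ 3)⁻¹ with hμ
  have hrel : ∀ s : Fˣ, μ * (((s : F) ^ 3)⁻¹) ^ 7 * (ν * (s : F) ^ 7) ^ 3 = 1 := by
    intro s
    have := s.ne_zero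
    rw [hμ]
    field_simp
  have hK := fun s : Fˣ => Krad_card d (hrel s)
  have hD := Krad_double (t := t) μ
  rw [sum_units, sum_units (g := fun b => eps (t b) * _)] at hD
  rw [← (cube_inv_bij d).sum_comp, ← (cube_inv_bij d).sum_comp (fun s : Fˣ => eps (t (s : F)) * _)] at hD
  have z1 : ∑ c ∈ Krad t μ 0, eps (t c) = 0 := by
    rw [Krad_zero]
    refine sum_add_shift t ⟨1, ?_⟩
    rw [d.one]; decide
  have z2 : eps (t 0) * ((Krad t μ 0).card : ℤ) = 2 ^ n := by
    rw [Krad_zero, map_zero, eps_zero, one_mul, Finset.card_univ, d.card]; push_cast; rfl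
  rw [z1, z2] at hD
  have r : ∀ s : Fˣ, eps (t (((s ^ 3)⁻¹ : Fˣ) : F)) * ((Krad t μ (((s ^ 3)⁻¹ : Fˣ) : F)).card : ℤ) =
      5 * eps (t (0 * (s : F) ^ 7 + 1 * ((s : F) ^ 3)⁻¹))
      + 3 * eps (t (ν * (s : F) ^ 7 + 1 * ((s : F) ^ 3)⁻¹)) := by
    intro s
    push_cast
    rw [hK, zero_mul, zero_add, one_mul, map_add, eps_add]
    by_cases h : t (ν * (s : F) ^ 7) = 0
    · rw [if_pos h, h, eps_zero]; push_cast; ring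
    · rw [if_neg h, zmod2_ne h]
      have : eps 1 = -1 := by decide
      rw [this]; push_cast; ring
  have l : ∀ s : Fˣ, 2 * ∑ c ∈ Krad t μ (((s ^ 3)⁻¹ : Fˣ) : F), eps (t c) =
      16 * (if (((s ^ 3)⁻¹ : Fˣ) : F) ∈ XX t μ then 1 else 0) +
      (1 + eps (t (0 * (s : F) ^ 7 + 1 * ((s : F) ^ 3)⁻¹)) - eps (t (ν * (s : F) ^ 7 + 0 * ((s : F) ^ 3)⁻¹))
        - eps (t (ν * (s : F) ^ 7 + 1 * ((s : F) ^ 3)⁻¹))) := by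
    intro s
    have hs := s.ne_zero
    have e1 : eps 1 = -1 := by decide
    rw [Krad_sum]
    push_cast
    rw [zero_mul, zero_add, one_mul, zero_mul, add_zero, map_add t (ν * _), eps_add]
    simp only [XX, Finset.mem_filter, Finset.mem_univ, true_and]
    rw [hK s]
    by_cases h : t (ν * (s : F) ^ 7) = 0
    · rw [if_pos h, h, eps_zero]
      have hne : ((s : F) ^ 3)⁻¹ ≠ 0 := inv_ne_zero (pow_ne_zero _ hs)
      by_cases hh : ∀ c ∈ Krad t μ ((s : F) ^ 3)⁻¹, t c = 0
      · rw [if_pos hh, if_pos ⟨hne, rfl, hh⟩]; push_cast; ring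
      · rw [if_neg hh, if_neg (fun h => hh h.2.2)]; ring
    · rw [if_neg h, zmod2_ne h, e1]
      rw [if_neg (show ¬(_ ≠ (0:F) ∧ (2:ℕ) = 8 ∧ _) from fun h => absurd h.2.1 (by norm_num))]
      set b := ((s : F) ^ 3)⁻¹ with hb
      have hne : b ≠ 0 := inv_ne_zero (pow_ne_zero _ hs)
      have hKb : ({0, b} : Finset F) = Krad t μ b := by
        apply Finset.eq_of_subset_of_card_le
        · intro x hx
          simp only [Finset.mem_insert, Finset.mem_singleton] at hx
          rcases hx with rfl | rfl
          · exact zero_mem_Krad _ _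
          · exact self_mem_Krad _ _
        · rw [hK s, if_neg h, Finset.card_pair hne.symm]
      rw [← hKb]
      by_cases hb0 : t b = 0
      · rw [if_pos, hb0, eps_zero]
        · norm_num
        · simp [hb0]
      · rw [if_neg, zmod2_ne hb0, e1]
        · norm_num
        · simp [hb0]
  have cX : ∑ s : Fˣ, (if (((s ^ 3)⁻¹ : Fˣ) : F) ∈ XX t μ then (1:ℤ) else 0) = (XX t μ).card := by
    rw [(cube_inv_bij d).sum_comp (fun s : Fˣ => (if (s : F) ∈ XX t μ then (1:ℤ) else 0))]
    have := sum_units (F := F) (fun s => (if s ∈ XX t μ then (1:ℤ) else 0))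
    rw [if_neg (by simp [XX]), zero_add] at this
    rw [← this]
    simp
  have L : 2 * ∑ s : Fˣ, ∑ c ∈ Krad t μ (((s ^ 3)⁻¹ : Fˣ) : F), eps (t c) =
      16 * (XX t μ).card + (2 ^ n - 1 + TT t 0 1 - TT t ν 0 - TT t ν 1) := by
    rw [Finset.mul_sum, Finset.sum_congr rfl (fun s _ => l s), Finset.sum_add_distrib,
      ← Finset.mul_sum, cX, Finset.sum_sub_distrib, Finset.sum_sub_distrib, Finset.sum_add_distrib]
    have := card_units d
    simp only [Finset.sum_const, Finset.card_univ, nsmul_eq_mul, mul_one]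
    rw [this]
    rfl
  have R : ∑ s : Fˣ, eps (t (((s ^ 3)⁻¹ : Fˣ) : F)) * ((Krad t μ (((s ^ 3)⁻¹ : Fˣ) : F)).card : ℤ) =
      5 * TT t 0 1 + 3 * TT t ν 1 := by
    rw [Finset.sum_congr rfl (fun s _ => r s), Finset.sum_add_distrib, ← Finset.mul_sum,
      ← Finset.mul_sum]
    rfl
  have hD' : ∑ s : Fˣ, ∑ c ∈ Krad t μ (((s ^ 3)⁻¹ : Fˣ) : F), eps (t c) = 2 ^ n +
      ∑ s : Fˣ, eps (t (((s ^ 3)⁻¹ : Fˣ) : F)) * ((Krad t μ (((s ^ 3)⁻¹ : Fˣ) : F)).card : ℤ) := by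
    simpa using hD
  rw [R] at hD'
  rw [hD', TT_zero_one d] at L
  linarith

lemma TT_scale (A B : F) (r : Fˣ) : TT t (A * (r : F) ^ 7) (B * ((r : F) ^ 3)⁻¹) = TT t A B := by
  unfold TT
  rw [← Equiv.sum_comp (Equiv.mulLeft r) (fun s : Fˣ => eps (t (A * (s : F) ^ 7 + B * ((s : F) ^ 3)⁻¹)))]
  refine Finset.sum_congr rfl fun s _ => ?_
  congr 2
  simp only [Equiv.coe_mulLeft, Units.val_mul, mul_pow, mul_inv]
  ring

lemma dsum (d : TrData t n) (u v : F) : ∑ A, ∑ B, eps (t (A * u + B * v)) =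
    if u = 0 ∧ v = 0 then (2 ^ n : ℤ) ^ 2 else 0 := by
  simp only [map_add, eps_add, ← Finset.mul_sum, ← Finset.sum_mul, sum_char d]
  by_cases hu : u = 0 <;> by_cases hv : v = 0 <;> simp [hu, hv]
  ring

lemma sum_sq (d : TrData t n) : ∑ A, ∑ B, TT t A B ^ 2 = (2 ^ n : ℤ) ^ 2 * (2 ^ n - 1) := by
  have h1 : ∀ A B, TT t A B ^ 2 = ∑ s : Fˣ, ∑ r : Fˣ,
      eps (t (A * ((s : F) ^ 7 + (r : F) ^ 7) + B * (((s : F) ^ 3)⁻¹ + ((r : F) ^ 3)⁻¹))) := by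
    intro A B
    unfold TT
    rw [sq, Finset.sum_mul_sum]
    refine Finset.sum_congr rfl fun s _ => Finset.sum_congr rfl fun r _ => ?_
    rw [← eps_add, ← map_add]
    congr 2; ring
  simp only [h1]
  have h2 : ∀ (g : F → F → Fˣ → Fˣ → ℤ), ∑ A, ∑ B, ∑ s, ∑ r, g A B s r =
      ∑ s, ∑ r, ∑ A, ∑ B, g A B s r := by
    intro g
    calc _ = ∑ A, ∑ s, ∑ r, ∑ B, g A B s r := by
          refine Finset.sum_congr rfl fun A _ => ?_
          rw [Finset.sum_comm]
          refine Finset.sum_congr rfl fun s _ => ?_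
          rw [Finset.sum_comm]
      _ = _ := by
          rw [Finset.sum_comm]
          refine Finset.sum_congr rfl fun s _ => ?_
          rw [Finset.sum_comm]
  rw [h2]
  simp only [dsum d]
  have h3 : ∀ s r : Fˣ, (if (s : F) ^ 7 + (r : F) ^ 7 = 0 ∧ ((s : F) ^ 3)⁻¹ + ((r : F) ^ 3)⁻¹ = 0
      then ((2:ℤ) ^ n) ^ 2 else 0) = if s = r then ((2:ℤ) ^ n) ^ 2 else 0 := by
    intro s r
    by_cases h : s = r
    · subst h; simp [self_add]
    · rw [if_neg h, if_neg]
      rintro ⟨_, h2⟩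
      have := inv_injective (add_eq_zero_iff2.1 h2)
      exact h (Units.ext (cube_inj d this))
  simp only [h3]
  simp [Finset.sum_ite_eq]
  rw [card_units d]; ring

open Polynomial in
lemma triple_card (d : TrData t n) :
    ((Finset.univ.filter fun p : Fˣ × Fˣ × Fˣ =>
      (p.1 : F) ^ 7 + (p.2.1 : F) ^ 7 + (p.2.2 : F) ^ 7 = 0 ∧
      ((p.1 : F) ^ 3)⁻¹ + ((p.2.1 : F) ^ 3)⁻¹ + ((p.2.2 : F) ^ 3)⁻¹ = 0).card : ℤ) ≤ 42 * (2 ^ n - 1) := by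
  classical
  set P : F[X] := X ^ 21 + (1 + X ^ 3) ^ 7 * (1 + X ^ 7) ^ 3 with hP
  have hP0 : P ≠ 0 := by
    intro h
    have := congrArg (eval 0) h
    simp [hP] at this
  have hdeg : P.natDegree ≤ 42 := by
    rw [hP]
    compute_degree
  have hroots : P.roots.toFinset.card ≤ 42 :=
    (Multiset.toFinset_card_le _).trans ((card_roots' P).trans hdeg)
  have hle : (Finset.univ.filter fun p : Fˣ × Fˣ × Fˣ =>
      (p.1 : F) ^ 7 + (p.2.1 : F) ^ 7 + (p.2.2 : F) ^ 7 = 0 ∧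
      ((p.1 : F) ^ 3)⁻¹ + ((p.2.1 : F) ^ 3)⁻¹ + ((p.2.2 : F) ^ 3)⁻¹ = 0).card ≤
      ((Finset.univ : Finset Fˣ) ×ˢ P.roots.toFinset).card := by
    refine Finset.card_le_card_of_injOn
      (fun p => (p.2.2, (p.2.1 : F) / (p.2.2 : F))) ?_ ?_
    · rintro ⟨a, b, c⟩ h
      simp only [Finset.coe_filter, Finset.mem_univ, true_and, Set.mem_ofPred_eq] at h
      obtain ⟨h1, h2⟩ := h
      have ha := a.ne_zero
      have hb := b.ne_zero
      have hc := c.ne_zero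
      simp only [Finset.coe_product, Set.mem_prod, Finset.coe_univ, Set.mem_univ, true_and,
        Finset.mem_coe, Multiset.mem_toFinset, mem_roots hP0, IsRoot.def]
      set x : F := a / c with hx
      set y : F := b / c with hy
      have hx0 : x ≠ 0 := div_ne_zero ha hc
      have hy0 : y ≠ 0 := div_ne_zero hb hc
      have e1 : x ^ 7 + y ^ 7 + 1 = 0 := by
        have : x ^ 7 + y ^ 7 + 1 = ((a : F) ^ 7 + (b : F) ^ 7 + (c : F) ^ 7) / (c : F) ^ 7 := by
          rw [hx, hy]; field_simp
        rw [this, h1, zero_div]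
      have e2 : (x ^ 3)⁻¹ + (y ^ 3)⁻¹ + 1 = 0 := by
        have : (x ^ 3)⁻¹ + (y ^ 3)⁻¹ + 1 =
            (((a : F) ^ 3)⁻¹ + ((b : F) ^ 3)⁻¹ + ((c : F) ^ 3)⁻¹) * (c : F) ^ 3 := by
          rw [hx, hy]; field_simp
        rw [this, h2, zero_mul]
      have e3 : x ^ 7 = 1 + y ^ 7 := by
        apply add_eq_zero_iff2.1; rw [← e1]; ring
      have e4 : y ^ 3 = x ^ 3 * (1 + y ^ 3) := by
        apply add_eq_zero_iff2.1
        have : y ^ 3 + x ^ 3 * (1 + y ^ 3) = ((x ^ 3)⁻¹ + (y ^ 3)⁻¹ + 1) * (x ^ 3 * y ^ 3) := by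
          field_simp
          ring
        rw [this, e2, zero_mul]
      have : eval y P = 0 := by
        simp only [hP, eval_add, eval_mul, eval_pow, eval_X, eval_one]
        apply add_eq_zero_iff2.2
        calc y ^ 21 = (y ^ 3) ^ 7 := by ring
          _ = (x ^ 3 * (1 + y ^ 3)) ^ 7 := by rw [← e4]
          _ = (1 + y ^ 3) ^ 7 * (x ^ 7) ^ 3 := by ring
          _ = _ := by rw [e3]
      exact this
    · rintro ⟨a, b, c⟩ h ⟨a', b', c'⟩ h' e
      simp only [Finset.coe_filter, Finset.mem_univ, true_and, Set.mem_ofPred_eq] at h h'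
      simp only [Prod.mk.injEq] at e
      obtain ⟨rfl, e⟩ := e
      have hc := c.ne_zero
      have hb : (b : F) = b' := by
        field_simp at e; exact e
      have hb := Units.ext hb
      subst hb
      have ha : ((a : F) ^ 3)⁻¹ = ((a' : F) ^ 3)⁻¹ := by
        have := h.2.trans h'.2.symm
        exact add_right_cancel (add_right_cancel this)
      have ha := Units.ext (cube_inj d (inv_injective ha))
      subst ha
      rfl
  rw [Finset.card_product, Finset.card_univ] at hle
  have hu := card_units d
  have : (Fintype.card Fˣ * P.roots.toFinset.card : ℕ) ≤ Fintype.card Fˣ * 42 :=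
    Nat.mul_le_mul_left _ hroots
  have h3 := hle.trans this
  zify at h3
  rw [hu] at h3
  linarith

lemma sum_cube (d : TrData t n) :
    ∑ A, ∑ B, TT t A B ^ 3 ≤ (2 ^ n : ℤ) ^ 2 * (42 * (2 ^ n - 1)) := by
  have h1 : ∀ A B, TT t A B ^ 3 = ∑ p : Fˣ × Fˣ × Fˣ,
      eps (t (A * ((p.1 : F) ^ 7 + (p.2.1 : F) ^ 7 + (p.2.2 : F) ^ 7)
        + B * (((p.1 : F) ^ 3)⁻¹ + ((p.2.1 : F) ^ 3)⁻¹ + ((p.2.2 : F) ^ 3)⁻¹))) := by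
    intro A B
    unfold TT
    rw [pow_three, Finset.sum_mul_sum, Finset.sum_mul_sum, Fintype.sum_prod_type]
    refine Finset.sum_congr rfl fun s _ => ?_
    rw [Fintype.sum_prod_type, ← Finset.mul_sum, Finset.mul_sum]
    refine Finset.sum_congr rfl fun r _ => ?_
    rw [Finset.mul_sum]
    refine Finset.sum_congr rfl fun r' _ => ?_
    rw [← eps_add, ← map_add, ← eps_add, ← map_add]
    congr 2; ring
  simp only [h1]
  have h2 : ∀ (g : F → F → (Fˣ × Fˣ × Fˣ) → ℤ), ∑ A, ∑ B, ∑ s, g A B s =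
      ∑ s, ∑ A, ∑ B, g A B s := by
    intro g
    calc _ = ∑ A, ∑ s, ∑ B, g A B s := by
          refine Finset.sum_congr rfl fun A _ => ?_
          rw [Finset.sum_comm]
      _ = _ := by rw [Finset.sum_comm]
  rw [h2]
  simp only [dsum d]
  rw [← Finset.sum_filter, Finset.sum_const, nsmul_eq_mul, mul_comm]
  exact mul_le_mul_of_nonneg_left (triple_card d) (by positivity)

lemma root7 (d : TrData t n) {ν : F} (hν : ν ≠ 0) (c : F) :
    (Finset.univ.filter fun r : Fˣ => ν * (r : F) ^ 7 = c).card ≤ 7 := by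
  classical
  refine le_trans ?_ (Polynomial.card_nthRoots 7 (c / ν))
  refine le_trans ?_ (Multiset.toFinset_card_le _)
  refine Finset.card_le_card_of_injOn (fun r => (r : F)) ?_ ?_
  · intro r hr
    have hr : ν * (r : F) ^ 7 = c := by simpa using hr
    simp only [Finset.mem_coe, Multiset.mem_toFinset, Polynomial.mem_nthRoots (by norm_num : 0 < 7)]
    rw [← hr]; field_simp
  · intro a _ b _ h
    exact Units.ext h

lemma sum_b0_eq (d : TrData t n) : ∑ A, TT t A 0 ^ 2 =
    ∑ s : Fˣ, ∑ r : Fˣ, if (r : F) ^ 7 = (s : F) ^ 7 then (2 ^ n : ℤ) else 0 := by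
  have h1 : ∀ A, TT t A 0 ^ 2 = ∑ s : Fˣ, ∑ r : Fˣ,
      eps (t (A * ((r : F) ^ 7 + (s : F) ^ 7))) := by
    intro A
    unfold TT
    rw [sq, Finset.sum_mul_sum]
    refine Finset.sum_congr rfl fun s _ => Finset.sum_congr rfl fun r _ => ?_
    rw [← eps_add, ← map_add]
    congr 2; ring
  simp only [h1]
  rw [Finset.sum_comm]
  refine Finset.sum_congr rfl fun s _ => ?_
  rw [Finset.sum_comm]
  refine Finset.sum_congr rfl fun r _ => ?_
  rw [sum_char d]
  simp only [add_eq_zero_iff2]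

lemma sum_b0 (d : TrData t n) : ∑ A, TT t A 0 ^ 2 ≤ 7 * 2 ^ n * (2 ^ n - 1) := by
  rw [sum_b0_eq d, ← card_units d]
  have : ∀ s : Fˣ, (∑ r : Fˣ, if (r : F) ^ 7 = (s : F) ^ 7 then (2 ^ n : ℤ) else 0) ≤ 7 * 2 ^ n := by
    intro s
    rw [← Finset.sum_filter, Finset.sum_const, nsmul_eq_mul]
    refine mul_le_mul_of_nonneg_right ?_ (by positivity)
    have := root7 d one_ne_zero ((s : F) ^ 7)
    simp only [one_mul] at this
    exact_mod_cast this
  refine (Finset.sum_le_sum fun s _ => this s).trans ?_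
  rw [Finset.sum_const, nsmul_eq_mul, Finset.card_univ, mul_comm]

lemma w_bound (d : TrData t n) (hn : 1 ≤ n) {ν : F} (hν : ν ≠ 0) : TT t ν 0 ^ 2 ≤ 49 * 2 ^ n := by
  have h1 : ∑ r : Fˣ, TT t (ν * (r : F) ^ 7) 0 ^ 2 = (2 ^ n - 1) * TT t ν 0 ^ 2 := by
    rw [← card_units d]
    have : ∀ r : Fˣ, TT t (ν * (r : F) ^ 7) 0 ^ 2 = TT t ν 0 ^ 2 := by
      intro r
      have := TT_scale (t := t) ν 0 r
      rw [zero_mul] at this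
      rw [this]
    simp [this]
  have h2 : ∑ r : Fˣ, TT t (ν * (r : F) ^ 7) 0 ^ 2 ≤ 7 * ∑ A, TT t A 0 ^ 2 := by
    rw [← Finset.sum_fiberwise (s := Finset.univ) (g := fun r : Fˣ => ν * (r : F) ^ 7), Finset.mul_sum]
    refine Finset.sum_le_sum fun A _ => ?_
    rw [Finset.sum_congr rfl (g := fun _ => TT t A 0 ^ 2)]
    · rw [Finset.sum_const, nsmul_eq_mul]
      refine mul_le_mul_of_nonneg_right ?_ (by positivity)
      exact_mod_cast root7 d hν A
    · intro r hr
      simp only [Finset.mem_filter, Finset.mem_univ, true_and] at hr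
      rw [hr]
  have h3 := sum_b0 d
  have h4 : (2:ℤ) ≤ 2 ^ n := by
    calc (2:ℤ) = 2 ^ 1 := by norm_num
      _ ≤ 2 ^ n := pow_le_pow_right₀ (by norm_num) hn
  rw [h1] at h2
  have h5 : (2 ^ n - 1) * TT t ν 0 ^ 2 ≤ (2 ^ n - 1) * (49 * 2 ^ n : ℤ) := by nlinarith
  exact le_of_mul_le_mul_left h5 (by linarith)

lemma w7 (d : TrData t 7) {ν : F} (hν : ν ≠ 0) : TT t ν 0 = -1 := by
  have hb : Function.Bijective (fun s : Fˣ => s ^ 7) := by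
    have h : (Nat.card Fˣ).Coprime 7 := by rw [natcard_units d]; norm_num
    exact (powCoprime h).bijective
  have h := sum_char d ν
  rw [if_neg hν, sum_units] at h
  simp only [zero_mul, map_zero, eps_zero] at h
  have : TT t ν 0 = ∑ s : Fˣ, eps (t ((s : F) * ν)) := by
    unfold TT
    rw [← hb.sum_comp (fun s : Fˣ => eps (t ((s : F) * ν)))]
    refine Finset.sum_congr rfl fun s _ => ?_
    simp [mul_comm]
  omega

lemma TT_zero_zero (d : TrData t n) : TT t 0 0 = 2 ^ n - 1 := by
  rw [← card_units d]
  simp [TT, eps_zero]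

lemma TT_zero_unit (d : TrData t n) (r : Fˣ) : TT t 0 ((r : F) ^ 3)⁻¹ = -1 := by
  have := TT_scale (t := t) 0 1 r
  rw [zero_mul, one_mul] at this
  rw [this, TT_zero_one d]

/-- The weighted moment inequality. -/
lemma moment (d : TrData t n) (hn : 1 ≤ n) (L : ℤ) (hL1 : 1 ≤ L)
    (hL : ∀ A : F, A ≠ 0 → - L ≤ TT t A 1)
    (h0 : - ((2 ^ n : ℤ) ^ 2 * (2 ^ n - 1)) ≤ ∑ A, TT t A 0 ^ 2 * (TT t A 0 + L)) (ν : F) :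
    TT t ν 1 ^ 2 * (TT t ν 1 + L) ≤ (2 ^ n : ℤ) ^ 2 * (43 + L) := by
  have tot : ∑ B, ∑ A, TT t A B ^ 2 * (TT t A B + L) ≤ (2 ^ n : ℤ) ^ 2 * (2 ^ n - 1) * (42 + L) := by
    rw [Finset.sum_comm]
    have : ∀ A B, TT t A B ^ 2 * (TT t A B + L) = TT t A B ^ 3 + L * TT t A B ^ 2 := by
      intros; ring
    simp only [this, Finset.sum_add_distrib, ← Finset.mul_sum]
    rw [sum_sq d]
    have := sum_cube d
    linarith
  rw [sum_units (g := fun B => ∑ A, TT t A B ^ 2 * (TT t A B + L)),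
    ← (cube_inv_bij d).sum_comp (fun B : Fˣ => ∑ A, TT t A B ^ 2 * (TT t A B + L))] at tot
  have e : ∀ s : Fˣ, ∑ A, TT t A (((s ^ 3)⁻¹ : Fˣ) : F) ^ 2 * (TT t A (((s ^ 3)⁻¹ : Fˣ) : F) + L) =
      ∑ A, TT t A 1 ^ 2 * (TT t A 1 + L) := by
    intro s
    have hb : Function.Bijective (fun A : F => A * (s : F) ^ 7) :=
      (Equiv.mulRight₀ ((s : F) ^ 7) (pow_ne_zero _ s.ne_zero)).bijective
    rw [← hb.sum_comp]
    refine Finset.sum_congr rfl fun A _ => ?_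
    have := TT_scale (t := t) A 1 s
    rw [one_mul] at this
    push_cast
    rw [this]
  simp only [e] at tot
  rw [Finset.sum_const, nsmul_eq_mul, Finset.card_univ, card_units d] at tot
  have nonneg : ∀ A, 0 ≤ TT t A 1 ^ 2 * (TT t A 1 + L) := by
    intro A
    by_cases hA : A = 0
    · subst hA; rw [TT_zero_one d]; linarith
    · have := hL A hA
      exact mul_nonneg (sq_nonneg _) (by linarith)
  have single := Finset.single_le_sum (f := fun A => TT t A 1 ^ 2 * (TT t A 1 + L))
    (fun A _ => nonneg A) (Finset.mem_univ ν)
  have h4 : (2:ℤ) ≤ 2 ^ n := by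
    calc (2:ℤ) = 2 ^ 1 := by norm_num
      _ ≤ 2 ^ n := pow_le_pow_right₀ (by norm_num) hn
  refine single.trans ?_
  refine le_of_mul_le_mul_left ?_ (show (0:ℤ) < 2 ^ n - 1 by linarith)
  linarith

lemma X_bound7 (d : TrData t 7) {ν : F} (hν : ν ≠ 0) : (XX t (ν ^ 3)⁻¹).card ≤ 46 := by
  have hc := fun (A : F) (hA : A ≠ 0) => countX d hA
  have hm := moment d (by norm_num) 17 (by norm_num) (by
    intro A hA
    have := hc A hA
    rw [w7 d hA] at this
    omega) (by
    have : 0 ≤ ∑ A, TT t A 0 ^ 2 * (TT t A 0 + 17) := by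
      refine Finset.sum_nonneg fun A _ => ?_
      by_cases hA : A = 0
      · subst hA; rw [TT_zero_zero d]; norm_num
      · rw [w7 d hA]; norm_num
    linarith) ν
  have := hc ν hν
  rw [w7 d hν] at this
  by_contra hlt
  push Not at hlt
  have hT : 95 ≤ TT t ν 1 := by omega
  nlinarith [mul_le_mul hT hT (by norm_num) (by linarith)]

lemma X_bound9 (d : TrData t n) (hn : 9 ≤ n) {ν : F} (hν : ν ≠ 0) :
    ((XX t (ν ^ 3)⁻¹).card : ℤ) ≤ 13 * 2 ^ (n - 5) - 6 := by
  obtain ⟨m, rfl⟩ : ∃ m, n = m + 5 := ⟨n - 5, by omega⟩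
  rw [Nat.add_sub_cancel]
  have hc := fun (A : F) (hA : A ≠ 0) => countX d hA
  have hw := fun (A : F) (hA : A ≠ 0) => w_bound d (by omega) hA
  have hs := sum_b0 d
  have hmom := moment d (by omega)
  have hq : (16:ℤ) ≤ 2 ^ m := by
    calc (16:ℤ) = 2 ^ 4 := by norm_num
      _ ≤ 2 ^ m := pow_le_pow_right₀ (by norm_num) (by omega)
  have hpow : (2:ℤ) ^ (m + 5) = 32 * 2 ^ m := by ring
  have hz := TT_zero_zero d
  simp only [hpow] at *
  generalize (2:ℤ) ^ m = k at *
  have hwb : ∀ A : F, A ≠ 0 → TT t A 0 ≤ 10 * k ∧ - (10 * k) ≤ TT t A 0 := by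
    intro A hA
    have := hw A hA
    refine abs_le.1 ?_ |>.symm
    refine abs_le_of_sq_le_sq ?_ (by linarith)
    nlinarith
  have hm := hmom (6 * k) (by linarith) (by
    intro A hA
    have h1 := hc A hA
    have h2 := (hwb A hA).1
    have : (0:ℤ) ≤ (XX t (A ^ 3)⁻¹).card := by positivity
    linarith) (by
    have : ∀ A, - (4 * k) * TT t A 0 ^ 2 ≤ TT t A 0 ^ 2 * (TT t A 0 + 6 * k) := by
      intro A
      have h2 : - (10 * k) ≤ TT t A 0 := by
        by_cases hA : A = 0
        · subst hA; rw [hz]; linarith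
        · exact (hwb A hA).2
      nlinarith [sq_nonneg (TT t A 0)]
    have h5 := Finset.sum_le_sum (s := Finset.univ) (fun A _ => this A)
    rw [← Finset.mul_sum] at h5
    nlinarith) ν
  have h1 := hc ν hν
  have h2 := hwb ν hν
  by_contra hlt
  push Not at hlt
  have hT : 22 * k ≤ TT t ν 1 := by linarith
  have h6 : (22 * k) * (22 * k) ≤ TT t ν 1 ^ 2 := by nlinarith
  have h7 : (22 * k) * (22 * k) * (28 * k) ≤ TT t ν 1 ^ 2 * (TT t ν 1 + 6 * k) := by
    apply mul_le_mul h6 (by linarith) (by linarith) (by positivity)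
  have h8 : 0 < k ^ 2 := by positivity
  nlinarith

lemma X_bound (d : TrData t n) (hn : 7 ≤ n) {ν : F} (hν : ν ≠ 0) :
    ((XX t (ν ^ 3)⁻¹).card : ℤ) ≤ 13 * 2 ^ (n - 5) - 6 := by
  rcases eq_or_lt_of_le hn with h | h
  · subst h
    have := X_bound7 d hν
    norm_num
    omega
  · have := d.odd
    refine X_bound9 d ?_ hν
    rcases this with ⟨k, rfl⟩
    omega

/-- permanent of the 4×4 Moore matrix -/
def P4 (a b c x : F) : F :=
  a * b ^ 2 * c ^ 4 * x ^ 8 + a * b ^ 2 * c ^ 8 * x ^ 4 + a * b ^ 4 * c ^ 2 * x ^ 8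
    + a * b ^ 4 * c ^ 8 * x ^ 2 + a * b ^ 8 * c ^ 2 * x ^ 4 + a * b ^ 8 * c ^ 4 * x ^ 2
    + a ^ 2 * b * c ^ 4 * x ^ 8 + a ^ 2 * b * c ^ 8 * x ^ 4 + a ^ 2 * b ^ 4 * c * x ^ 8
    + a ^ 2 * b ^ 4 * c ^ 8 * x + a ^ 2 * b ^ 8 * c * x ^ 4 + a ^ 2 * b ^ 8 * c ^ 4 * x
    + a ^ 4 * b * c ^ 2 * x ^ 8 + a ^ 4 * b * c ^ 8 * x ^ 2 + a ^ 4 * b ^ 2 * c * x ^ 8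
    + a ^ 4 * b ^ 2 * c ^ 8 * x + a ^ 4 * b ^ 8 * c * x ^ 2 + a ^ 4 * b ^ 8 * c ^ 2 * x
    + a ^ 8 * b * c ^ 2 * x ^ 4 + a ^ 8 * b * c ^ 4 * x ^ 2 + a ^ 8 * b ^ 2 * c * x ^ 4
    + a ^ 8 * b ^ 2 * c ^ 4 * x + a ^ 8 * b ^ 4 * c * x ^ 2 + a ^ 8 * b ^ 4 * c ^ 2 * x

/-- product of four elements -/
def pr4 (u0 u1 u2 u3 : F) : F := u0 * u1 * u2 * u3

lemma polar (pr : F → F → F → F → F) (hpr : ∀ a b c d, pr a b c d = a * b * c * d)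
    (y0 y1 y2 y3 a0 a1 a2 a3 b0 b1 b2 b3 c0 c1 c2 c3 x0 x1 x2 x3 : F) :
    ((((pr (y0 + x0 + c0 + b0 + a0) (y1 + x1 + c1 + b1 + a1) (y2 + x2 + c2 + b2 + a2) (y3 + x3 + c3 + b3 + a3) - pr (y0 + x0 + c0 + b0) (y1 + x1 + c1 + b1) (y2 + x2 + c2 + b2) (y3 + x3 + c3 + b3)) - (pr (y0 + x0 + c0 + a0) (y1 + x1 + c1 + a1) (y2 + x2 + c2 + a2) (y3 + x3 + c3 + a3) - pr (y0 + x0 + c0) (y1 + x1 + c1) (y2 + x2 + c2) (y3 + x3 + c3))) - ((pr (y0 + x0 + b0 + a0) (y1 + x1 + b1 + a1) (y2 + x2 + b2 + a2) (y3 + x3 + b3 + a3) - pr (y0 + x0 + b0) (y1 + x1 + b1) (y2 + x2 + b2) (y3 + x3 + b3)) - (pr (y0 + x0 + a0) (y1 + x1 + a1) (y2 + x2 + a2) (y3 + x3 + a3) - pr (y0 + x0) (y1 + x1) (y2 + x2) (y3 + x3)))) - (((pr (y0 + c0 + b0 + a0) (y1 + c1 + b1 + a1) (y2 + c2 + b2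 + a2) (y3 + c3 + b3 + a3) - pr (y0 + c0 + b0) (y1 + c1 + b1) (y2 + c2 + b2) (y3 + c3 + b3)) - (pr (y0 + c0 + a0) (y1 + c1 + a1) (y2 + c2 + a2) (y3 + c3 + a3) - pr (y0 + c0) (y1 + c1) (y2 + c2) (y3 + c3))) - ((pr (y0 + b0 + a0) (y1 + b1 + a1) (y2 + b2 + a2) (y3 + b3 + a3) - pr (y0 + b0) (y1 + b1) (y2 + b2) (y3 + b3)) - (pr (y0 + a0) (y1 + a1) (y2 + a2) (y3 + a3) - pr y0 y1 y2 y3)))) =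
    a0 * b1 * c2 * x3 + a0 * b1 * c3 * x2 + a0 * b2 * c1 * x3
    + a0 * b2 * c3 * x1 + a0 * b3 * c1 * x2 + a0 * b3 * c2 * x1
    + a1 * b0 * c2 * x3 + a1 * b0 * c3 * x2 + a1 * b2 * c0 * x3
    + a1 * b2 * c3 * x0 + a1 * b3 * c0 * x2 + a1 * b3 * c2 * x0
    + a2 * b0 * c1 * x3 + a2 * b0 * c3 * x1 + a2 * b1 * c0 * x3
    + a2 * b1 * c3 * x0 + a2 * b3 * c0 * x1 + a2 * b3 * c1 * x0
    + a3 * b0 * c1 * x2 + a3 * b0 * c2 * x1 + a3 * b1 * c0 * x2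
    + a3 * b1 * c2 * x0 + a3 * b2 * c0 * x1 + a3 * b2 * c1 * x0 := by
  simp only [hpr]
  ring

lemma pow15 (y : F) : y ^ 15 = y * y ^ 2 * y ^ 4 * y ^ 8 := by ring

/-- fourth derivative of the fifteenth power -/
lemma der4 (f : F → ZMod 2) (hf : ∀ x, f x = t (x ^ 15)) (y a b c x : F) :
    ((((f (y) + f (y + a)) + (f (y + b) + f (y + b + a))) + ((f (y + c) + f (y + c + a)) + (f (y + c + b) + f (y + c + b + a)))) + (((f (y + x) + f (y + x + a)) + (f (y + x + b) + f (y + x + b + a))) + ((f (y + x + c) + f (y + x + c + a)) + (f (y + x + c + b) + f (y + x + c + b + a))))) = t (P4 a b c x) := by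
  have h := polar (fun a b c d => a * b * c * d) (fun _ _ _ _ => rfl)
    y (y ^ 2) (y ^ 4) (y ^ 8) a (a ^ 2) (a ^ 4) (a ^ 8) b (b ^ 2) (b ^ 4) (b ^ 8) c (c ^ 2) (c ^ 4) (c ^ 8) x (x ^ 2) (x ^ 4) (x ^ 8)
  simp only [← add_sq2, ← add_pow4, ← add_pow8, ← pow15, CharTwo.sub_eq_add] at h
  unfold P4
  rw [← h]
  simp only [hf, map_add]
  ring

lemma P4_scale (a b c x : F) : P4 a (a * b) (a * c) (a * x) =
    a ^ 15 * M3 (b ^ 2 + b) (c ^ 2 + c) (x ^ 2 + x) := by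
  unfold M3
  simp only [add_sq2, add_pow4]
  rw [← add_eq_zero_iff2]
  unfold P4
  ring_nf
  simp only [show (4:F) = 0 by rw [show (4:F) = 2 * 2 by norm_num, two_zero, zero_mul], two_zero, mul_zero, add_zero, zero_add]

lemma P4_add (a b c x y : F) : P4 a b c (x + y) = P4 a b c x + P4 a b c y := by
  unfold P4
  simp only [add_sq2, add_pow4, add_pow8]
  ring

variable (t) in
/-- kernel of the bilinear form attached to the second derivative -/
def ker2 (a b : F) : Finset F := Finset.univ.filter fun c => ∀ x, t (P4 a b c x) = 0

variable (t) in
/-- radical of the form restricted to the trace zero hyperplane -/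
def Wrad (μ b : F) : Finset F :=
  Finset.univ.filter fun c => t c = 0 ∧ ∀ x, t x = 0 → t (μ * M3 b c x) = 0

lemma ker2_card (d : TrData t n) {a : F} (ha : a ≠ 0) (b : F) :
    (ker2 t a (a * b)).card = 2 * (Wrad t (a ^ 15) (b ^ 2 + b)).card := by
  rw [← as_card d (Wrad t (a ^ 15) (b ^ 2 + b)) (by intro z hz; simp [Wrad] at hz; exact hz.1)]
  have key : ∀ y, a * y ∈ ker2 t a (a * b) ↔ y ^ 2 + y ∈ Wrad t (a ^ 15) (b ^ 2 + b) := by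
    intro y
    simp only [ker2, Wrad, Finset.mem_filter, Finset.mem_univ, true_and]
    constructor
    · intro H
      refine ⟨tr_sq_add d y, fun x hx => ?_⟩
      obtain ⟨z, rfl⟩ := hilb d hx
      rw [← P4_scale]
      exact H _
    · rintro ⟨_, H⟩ x
      have : x = a * (x / a) := by field_simp
      rw [this, P4_scale]
      exact H _ (tr_sq_add d _)
  refine (Finset.card_bij (fun y _ => a * y) ?_ ?_ ?_).symm
  · intro y hy
    rw [key]; simpa using hy
  · intro y _ y' _ e
    exact mul_left_cancel₀ ha e
  · intro c hc
    refine ⟨c / a, ?_, by field_simp⟩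
    simp only [Finset.mem_filter, Finset.mem_univ, true_and]
    rw [← key]
    rwa [mul_div_cancel₀ _ ha]

lemma Wrad_le (d : TrData t n) (μ b : F) : (Wrad t μ b).card ≤ 2 * (Krad t μ b).card := by
  by_cases h : Wrad t μ b ⊆ Krad t μ b
  · have := Finset.card_le_card h
    omega
  · rw [Finset.not_subset] at h
    obtain ⟨v, hv, hv'⟩ := h
    have inK : ∀ c ∈ Wrad t μ b, t (μ * M3 b c 1) = 0 → c ∈ Krad t μ b := by
      intro c hc h1
      rw [mem_Krad]
      intro x
      simp only [Wrad, Finset.mem_filter, Finset.mem_univ, true_and] at hc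
      by_cases hx : t x = 0
      · exact hc.2 x hx
      · have := hc.2 (x + 1) (by rw [map_add, zmod2_ne hx, d.one]; decide)
        rwa [M3_add, mul_add, map_add, h1, add_zero] at this
    have hv1 : t (μ * M3 b v 1) = 1 := by
      apply zmod2_ne
      intro h0
      exact hv' (inK v hv h0)
    have hsub : Wrad t μ b ⊆ Krad t μ b ∪ (Krad t μ b).image (fun c => c + v) := by
      intro c hc
      rw [Finset.mem_union]
      by_cases h1 : t (μ * M3 b c 1) = 0
      · exact Or.inl (inK c hc h1)
      · right
        rw [Finset.mem_image]
        refine ⟨c + v, inK _ ?_ ?_, by rw [add_assoc, self_add, add_zero]⟩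
        · simp only [Wrad, Finset.mem_filter, Finset.mem_univ, true_and] at hc hv ⊢
          refine ⟨by rw [map_add, hc.1, hv.1, add_zero], fun x hx => ?_⟩
          rw [M3_add', mul_add, map_add, hc.2 x hx, hv.2 x hx, add_zero]
        · rw [M3_add', mul_add, map_add, zmod2_ne h1, hv1]; decide
    refine (Finset.card_le_card hsub).trans ((Finset.card_union_le _ _).trans ?_)
    have := Finset.card_image_le (s := Krad t μ b) (f := fun c => c + v)
    omega

lemma Wrad_le' (μ b v : F) (hv : v ∈ Krad t μ b) (htv : t v ≠ 0) :
    2 * (Wrad t μ b).card ≤ (Krad t μ b).card := by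
  have hW : ∀ c ∈ Wrad t μ b, c ∈ Krad t μ b ∧ t c = 0 := by
    intro c hc
    simp only [Wrad, Finset.mem_filter, Finset.mem_univ, true_and] at hc
    refine ⟨?_, hc.1⟩
    rw [mem_Krad] at hv ⊢
    have hcv : t (μ * M3 b c v) = 0 := by rw [M3_symm']; exact hv c
    intro x
    by_cases hx : t x = 0
    · exact hc.2 x hx
    · have := hc.2 (x + v) (by rw [map_add, zmod2_ne hx, zmod2_ne htv]; decide)
      rwa [M3_add, mul_add, map_add, hcv, add_zero] at this
  have hdis : Disjoint (Wrad t μ b) ((Wrad t μ b).image (fun c => c + v)) := by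
    rw [Finset.disjoint_left]
    intro c hc hc'
    rw [Finset.mem_image] at hc'
    obtain ⟨c', h1, rfl⟩ := hc'
    have := (hW _ hc).2
    rw [map_add, (hW _ h1).2, zero_add] at this
    exact htv this
  have hsub : Wrad t μ b ∪ (Wrad t μ b).image (fun c => c + v) ⊆ Krad t μ b := by
    intro c hc
    rcases Finset.mem_union.1 hc with h | h
    · exact (hW c h).1
    · rw [Finset.mem_image] at h
      obtain ⟨c', h1, rfl⟩ := h
      exact Krad_add (hW _ h1).1 hv
  have := Finset.card_le_card hsub
  rw [Finset.card_union_of_disjoint hdis,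
    Finset.card_image_of_injective _ (add_left_injective v)] at this
  omega

lemma Wrad_card (d : TrData t n) {ν b : F} (hν : ν ≠ 0) (hb : b ≠ 0) :
    (Wrad t (ν ^ 3)⁻¹ b).card ≤ if b ∈ XX t (ν ^ 3)⁻¹ then 16 else 4 := by
  obtain ⟨s, hs⟩ := (cube_inv_bij d).2 (Units.mk0 b hb)
  have hs' : b = ((s : F) ^ 3)⁻¹ := by
    have := congrArg Units.val hs
    simpa using this.symm
  have hK := Krad_card d (μ := (ν ^ 3)⁻¹) (b := b) (δ := ν * (s : F) ^ 7) (by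
    rw [hs']
    have := s.ne_zero
    field_simp)
  have hle := Wrad_le d (ν ^ 3)⁻¹ b
  split_ifs with hX
  · simp only [XX, Finset.mem_filter, Finset.mem_univ, true_and] at hX
    omega
  · by_cases h8 : (Krad t (ν ^ 3)⁻¹ b).card = 8
    · simp only [XX, Finset.mem_filter, Finset.mem_univ, true_and, not_and] at hX
      have := hX hb h8
      push Not at this
      obtain ⟨v, hv, htv⟩ := this
      have := Wrad_le' _ _ v hv htv
      omega
    · split_ifs at hK <;> omega

lemma ker_bound (d : TrData t n) {a b : F} (ha : a ≠ 0) (hb : b ≠ 0) (hab : b ≠ a) :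
    (ker2 t a b).card ≤ if (b / a) ^ 2 + b / a ∈ XX t (((a ^ 5)⁻¹) ^ 3)⁻¹ then 32 else 8 := by
  have h1 : b = a * (b / a) := by field_simp
  have h2 := ker2_card d ha (b / a)
  rw [← h1] at h2
  have hν : (a ^ 5)⁻¹ ≠ 0 := inv_ne_zero (pow_ne_zero _ ha)
  have e : (((a ^ 5)⁻¹) ^ 3)⁻¹ = a ^ 15 := by
    rw [inv_pow, inv_inv]; ring
  have hβ : (b / a) ^ 2 + b / a ≠ 0 := by
    intro h
    have : (b / a) * (b / a + 1) = 0 := by rw [← h]; ring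
    rcases mul_eq_zero.1 this with h | h
    · exact (div_ne_zero hb ha) h
    · have := add_eq_zero_iff2.1 h
      rw [div_eq_one_iff_eq ha] at this
      exact hab this
  have h3 := Wrad_card d hν hβ
  rw [← e] at h2
  rw [h2]
  split_ifs at h3 ⊢ <;> omega

lemma bad_count (d : TrData t n) (hn : 7 ≤ n) {a : F} (ha : a ≠ 0) :
    ((Finset.univ.filter fun b : F => (b / a) ^ 2 + b / a ∈ XX t (((a ^ 5)⁻¹) ^ 3)⁻¹).card : ℤ)
      ≤ 2 * (13 * 2 ^ (n - 5) - 6) := by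
  have hν : (a ^ 5)⁻¹ ≠ 0 := inv_ne_zero (pow_ne_zero _ ha)
  set Z := XX t (((a ^ 5)⁻¹) ^ 3)⁻¹ with hZ
  have h1 := X_bound d hn hν
  have h2 := as_card d Z (by
    intro z hz
    simp only [hZ, XX, Finset.mem_filter, Finset.mem_univ, true_and] at hz
    exact hz.2.2 z (self_mem_Krad _ _))
  have h3 : (Finset.univ.filter fun b : F => (b / a) ^ 2 + b / a ∈ Z).card ≤
      (Finset.univ.filter fun y : F => y ^ 2 + y ∈ Z).card := by
    refine Finset.card_le_card_of_injOn (fun b => b / a) ?_ ?_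
    · intro b hb
      simpa using hb
    · intro b _ b' _ e
      exact (div_left_inj' ha).1 e
  rw [h2] at h3
  zify at h3
  linarith

/-- generic derivative -/
def DD (u : F → ZMod 2) (a : F) : F → ZMod 2 := fun y => u y + u (y + a)

lemma sq_sum (u : F → ZMod 2) : (∑ x, eps (u x)) ^ 2 = ∑ a, ∑ x, eps (DD u a x) := by
  rw [sq, Finset.sum_mul_sum, Finset.sum_comm (s := Finset.univ (α := F)) (f := fun a x => eps (DD u a x))]
  refine Finset.sum_congr rfl fun x _ => ?_
  simp only [DD, eps_add]
  exact (Equiv.sum_comp (Equiv.addLeft x) (fun y => eps (u x) * eps (u y))).symm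

lemma sum_eps_le (d : TrData t n) (u : F → ZMod 2) : ∑ x, eps (u x) ≤ 2 ^ n := by
  calc ∑ x, eps (u x) ≤ ∑ _x : F, (1:ℤ) := Finset.sum_le_sum fun x _ => eps_le _
    _ = 2 ^ n := by simp [d.card]

lemma Sab_sq (d : TrData t n) (h : F → ZMod 2)
    (H : ∀ a b c x y, DD (DD (DD (DD h a) b) c) x y = t (P4 a b c x)) (a b : F) :
    (∑ x, eps (DD (DD h a) b x)) ^ 2 ≤ 2 ^ n * ((ker2 t a b).card : ℤ) := by
  rw [sq_sum]
  have key : ∀ c, ∑ x, eps (DD (DD (DD h a) b) c x) ≤ if c ∈ ker2 t a b then 2 ^ n else 0 := by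
    intro c
    split_ifs with hc
    · exact sum_eps_le d _
    · apply le_of_eq
      have h0 : ∀ x, DD (DD (DD h a) b) c x = DD (DD (DD h a) b) c 0 + t (P4 a b c x) := by
        intro x
        rw [← H a b c x 0]
        show _ = _ + (DD (DD (DD h a) b) c 0 + DD (DD (DD h a) b) c (0 + x))
        rw [zero_add, ← add_assoc, zmod2_self, zero_add]
      have hs : ∑ x, eps (t (P4 a b c x)) = 0 := by
        refine sum_add_shift (t.comp (AddMonoidHom.mk' (fun x => P4 a b c x) (P4_add a b c))) ?_
        by_contra hcon
        push Not at hcon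
        exact hc (by simpa [ker2] using hcon)
      have : ∀ x, eps (DD (DD (DD h a) b) c x)
          = eps (DD (DD (DD h a) b) c 0) * eps (t (P4 a b c x)) := by
        intro x
        rw [h0 x, eps_add]
      rw [Finset.sum_congr rfl fun x _ => this x, ← Finset.mul_sum, hs, mul_zero]
  refine (Finset.sum_le_sum fun c _ => key c).trans (le_of_eq ?_)
  rw [← Finset.sum_filter]
  simp [mul_comm]

lemma Sa_sq (d : TrData t n) (hn : 7 ≤ n) (h : F → ZMod 2)
    (H : ∀ a b c x y, DD (DD (DD (DD h a) b) c) x y = t (P4 a b c x)) {k : ℕ}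
    (hk : n = 2 * k + 1) {a : F} (ha : a ≠ 0) :
    (∑ x, eps (DD h a x)) ^ 2 ≤
      2 * 2 ^ n + 2 ^ (k + 2) * ((2 ^ n - 2) + 2 * (13 * 2 ^ (n - 5) - 6)) := by
  rw [sq_sum]
  set B : F → Prop := fun b => (b / a) ^ 2 + b / a ∈ XX t (((a ^ 5)⁻¹) ^ 3)⁻¹ with hB
  have hdB : DecidablePred B := fun b => by rw [hB]; infer_instance
  have hbad : ((Finset.univ.filter B).card : ℤ) ≤ 2 * (13 * 2 ^ (n - 5) - 6) := by
    have := bad_count d hn ha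
    convert this
  have key : ∀ b ∈ (Finset.univ.erase (0:F)).erase a, ∑ x, eps (DD (DD h a) b x)
      ≤ 2 ^ (k + 2) * (1 + if B b then 1 else 0) := by
    intro b hb
    simp only [Finset.mem_erase, Finset.mem_univ, and_true] at hb
    have h1 := ker_bound d ha hb.2 hb.1
    have h2 := Sab_sq d h H a b
    refine le_of_abs_le (abs_le_of_sq_le_sq ?_ (by positivity))
    refine h2.trans ?_
    have hq : (2:ℤ) ^ n = 2 * (2 ^ k) ^ 2 := by rw [hk]; ring
    have hp : (0:ℤ) ≤ (2 ^ k) ^ 2 := by positivity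
    rw [hq, pow_add]
    by_cases hb' : B b
    · rw [if_pos hb'] at h1 ⊢
      have h3 : ((ker2 t a b).card : ℤ) ≤ 32 := by exact_mod_cast h1
      nlinarith
    · rw [if_neg hb'] at h1 ⊢
      have h3 : ((ker2 t a b).card : ℤ) ≤ 8 := by exact_mod_cast h1
      nlinarith
  have h0 : a ∈ Finset.univ.erase (0:F) := by simp [ha]
  rw [← Finset.add_sum_erase _ _ (Finset.mem_univ (0:F)), ← Finset.add_sum_erase _ _ h0]
  have e1 := sum_eps_le d (DD (DD h a) 0)
  have e2 := sum_eps_le d (DD (DD h a) a)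
  have e3 : ∑ b ∈ (Finset.univ.erase (0:F)).erase a, ∑ x, eps (DD (DD h a) b x)
      ≤ 2 ^ (k + 2) * ((2 ^ n - 2) + 2 * (13 * 2 ^ (n - 5) - 6)) := by
    refine (Finset.sum_le_sum key).trans ?_
    rw [← Finset.mul_sum]
    refine mul_le_mul_of_nonneg_left ?_ (by positivity)
    rw [Finset.sum_add_distrib]
    refine add_le_add (le_of_eq ?_) (le_trans ?_ hbad)
    · have hc := Finset.card_erase_add_one h0
      have hc' := Finset.card_erase_add_one (Finset.mem_univ (0:F))
      rw [Finset.card_univ, d.card] at hc'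
      rw [Finset.sum_const, nsmul_eq_mul, mul_one]
      have : (((Finset.univ.erase (0:F)).erase a).card : ℤ) + 2 = ((2 ^ n : ℕ) : ℤ) := by
        rw [← hc']; push_cast; omega
      push_cast at this
      linarith
    · rw [← Finset.sum_filter, Finset.sum_const, nsmul_eq_mul, mul_one]
      exact_mod_cast Finset.card_le_card (Finset.filter_subset_filter _ (Finset.subset_univ _))
  linarith

lemma S_sq (d : TrData t n) (hn : 7 ≤ n) (h : F → ZMod 2)
    (H : ∀ a b c x y, DD (DD (DD (DD h a) b) c) x y = t (P4 a b c x)) {k : ℕ}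
    (hk : n = 2 * k + 1) :
    (((∑ x, eps (h x) : ℤ) : ℝ)) ^ 2 ≤
      (2 ^ n - 1) * Real.sqrt
      (2 * 2 ^ n + 2 ^ (k + 2) * ((2 ^ n - 2) + 2 * (13 * 2 ^ (n - 5) - 6))) + 2 ^ n := by
  have h1 := sq_sum h
  rw [← Finset.add_sum_erase _ (fun a => ∑ x, eps (DD h a x)) (Finset.mem_univ (0:F))] at h1
  have h2 : (((∑ x, eps (h x) : ℤ) : ℝ)) ^ 2 = (((∑ x, eps (DD h 0 x)) +
      ∑ a ∈ Finset.univ.erase (0:F), ∑ x, eps (DD h a x) : ℤ) : ℝ) := by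
    rw [← h1]; push_cast; ring
  rw [h2, Int.cast_add, add_comm]
  refine add_le_add ?_ ?_
  · rw [Int.cast_sum]
    have hc' := Finset.card_erase_add_one (Finset.mem_univ (0:F))
    rw [Finset.card_univ, d.card] at hc'
    have hc : ((Finset.univ.erase (0:F)).card : ℝ) = 2 ^ n - 1 := by
      rw [eq_sub_iff_add_eq]; exact_mod_cast hc'
    rw [← hc, ← nsmul_eq_mul]
    refine Finset.sum_le_card_nsmul _ _ _ fun a ha => ?_
    apply Real.le_sqrt_of_sq_le
    have := Sa_sq d hn h H hk (Finset.ne_of_mem_erase ha)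
    exact_mod_cast this
  · exact_mod_cast sum_eps_le d _
end gen

lemma eps_dist (a b : ZMod 2) : eps (a + b) = 1 - 2 * (if a ≠ b then 1 else 0) := by
  revert a b; decide

lemma derIter_zero {n : ℕ} (l : List (Fq n)) : derIter (fun _ : Fq n => (0 : ZMod 2)) l = fun _ => 0 := by
  induction l with
  | nil => rfl
  | cons a l ih =>
    funext x
    simp only [derIter, ih, der, add_zero]

lemma trData {n : ℕ} (hodd : Odd n) [Fintype (Fq n)] :
    TrData ((Algebra.trace (ZMod 2) (Fq n)).toAddMonoidHom) n where
  sq x := by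
    have h := Algebra.trace_eq_of_algEquiv (FiniteField.frobeniusAlgEquivOfAlgebraic (ZMod 2) (Fq n)) x
    have h2 : (FiniteField.frobeniusAlgEquivOfAlgebraic (ZMod 2) (Fq n)) x = x ^ 2 := by
      simp [ZMod.card]
    rw [h2] at h
    exact h
  one := by
    have h := Algebra.trace_algebraMap (R := ZMod 2) (S := Fq n) 1
    rw [map_one, GaloisField.finrank 2 (by rintro rfl; simp at hodd), nsmul_eq_mul, mul_one,
      (ZMod.natCast_eq_one_iff_odd).2 hodd] at h
    exact h
  nd y hy := (traceForm_nondegenerate (ZMod 2) (Fq n)).2 y hy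
  card := by
    rw [← Nat.card_eq_fintype_card]
    exact GaloisField.card 2 n (by rintro rfl; simp at hodd)
  odd := hodd

lemma exists_min {n : ℕ} (f : Fq n → ZMod 2) : ∃ g, degLE g 3 ∧ nl 3 f = hdist f g := by
  have : nl 3 f ∈ {d : ℕ | ∃ g : Fq n → ZMod 2, degLE g 3 ∧ d = hdist f g} :=
    Nat.sInf_mem ⟨_, fun _ => 0, fun l _ => derIter_zero l, rfl⟩
  exact this

lemma sum_hdist {n : ℕ} (hn : n ≠ 0) [Fintype (Fq n)] (f g : Fq n → ZMod 2) :
    ∑ x, eps (f x + g x) = 2 ^ n - 2 * (hdist f g : ℤ) := by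
  simp only [eps_dist, Finset.sum_sub_distrib, ← Finset.mul_sum]
  congr 1
  · rw [Finset.sum_const, Finset.card_univ, ← Nat.card_eq_fintype_card, GaloisField.card 2 n hn]
    simp
  · congr 1
    rw [hdist, Set.ncard_eq_toFinset_card', ← Finset.sum_filter]
    simp

lemma main_bound {n k : ℕ} (hn : 7 ≤ n) (hk : n = 2 * k + 1)
    (f : Fq n → ZMod 2) (hf : ∀ x, f x = tr (x ^ 15)) :
    ((2:ℝ) ^ n - 2 * (nl 3 f : ℝ)) ≤ Real.sqrt ((2 ^ n - 1) * Real.sqrt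
      (2 * 2 ^ n + 2 ^ (k + 2) * ((2 ^ n - 2) + 2 * (13 * 2 ^ (n - 5) - 6))) + 2 ^ n) := by
  classical
  obtain ⟨g, hg, hnl⟩ := exists_min f
  letI : Fintype (Fq n) := Fintype.ofFinite _
  have d : TrData ((Algebra.trace (ZMod 2) (Fq n)).toAddMonoidHom) n := trData ⟨k, hk⟩
  have H : ∀ a b c x y, DD (DD (DD (DD (fun z => f z + g z) a) b) c) x y
      = (Algebra.trace (ZMod 2) (Fq n)).toAddMonoidHom (P4 a b c x) := by
    intro a b c x y
    rw [← der4 (t := (Algebra.trace (ZMod 2) (Fq n)).toAddMonoidHom) f hf y a b c x]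
    have h0 := congrFun (hg [x, c, b, a] rfl) y
    simp only [derIter, der] at h0
    rw [← add_zero (_ + _ : ZMod 2), ← h0]
    simp only [DD]
    ring
  have h := S_sq d hn (fun z => f z + g z) H hk
  rw [sum_hdist (by omega) f g, ← hnl] at h
  push_cast at h
  exact Real.le_sqrt_of_sq_le h

/-- Third-order nonlinearity lower bound for `tr(x^15)`, odd `n ≥ 7`. -/
theorem third_order_nl_tr_x15_odd (n : ℕ) (hn : 7 ≤ n) (hodd : Odd n)
    (f : Fq n → ZMod 2) (hf : ∀ x, f x = tr (x ^ 15)) :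
    (nl 3 f : ℝ) ≥ (2:ℝ) ^ ((n:ℝ) - 1) - (1/2) * Real.sqrt
      (((2:ℝ) ^ (n:ℝ) - 1) * Real.sqrt
        ((29/8) * (2:ℝ) ^ ((3 * (n:ℝ) + 1) / 2) + (2:ℝ) ^ ((n:ℝ) + 1)
          - 7 * (2:ℝ) ^ (((n:ℝ) + 5) / 2)) + (2:ℝ) ^ (n:ℝ)) := by
  obtain ⟨k, hk⟩ := hodd
  have h := main_bound hn hk f hf
  have hkr : (n : ℝ) = 2 * k + 1 := by rw [hk]; push_cast; ring
  have e1 : (2:ℝ) ^ ((n:ℝ) - 1) = 2 ^ n / 2 := by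
    rw [Real.rpow_sub_one (by norm_num), Real.rpow_natCast]
  have e2 : (2:ℝ) ^ ((n:ℝ) + 1) = 2 * 2 ^ n := by
    rw [Real.rpow_add_one (by norm_num), Real.rpow_natCast, mul_comm]
  have e3 : (2:ℝ) ^ ((3 * (n:ℝ) + 1) / 2) = 2 ^ (3 * k + 2) := by
    rw [← Real.rpow_natCast]; congr 1; push_cast; rw [hkr]; ring
  have e4 : (2:ℝ) ^ (((n:ℝ) + 5) / 2) = 2 ^ (k + 3) := by
    rw [← Real.rpow_natCast]; congr 1; push_cast; rw [hkr]; ring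
  have e5 : (2:ℝ) ^ (n - 5) = 2 ^ n / 32 := by
    rw [eq_div_iff (by norm_num), show (32:ℝ) = 2 ^ 5 by norm_num, ← pow_add]
    congr 1; omega
  have e6 : (2:ℝ) * 2 ^ n + 2 ^ (k + 2) * ((2 ^ n - 2) + 2 * (13 * 2 ^ (n - 5) - 6))
      = (29/8) * 2 ^ (3 * k + 2) + 2 * 2 ^ n - 7 * 2 ^ (k + 3) := by
    rw [e5, hk]; ring
  rw [e1, e2, e3, e4, Real.rpow_natCast, ← e6]
  linarith
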